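/- For all V, W ∈ PRT', the following quadratic relation holds in ℚ(q): a(V)·a(W) = Σ_{T ∈ PRT', deg(T) = deg(V) + deg(W)} a(T)·#N_{V,W}(T), the sum being finite since there are only finitely many planar reduced rooted trees of each degree. (This is the coefficientwise form of the identity Δ̂(EXP) = EXP ⊗̂ EXP for the generic planar exponential series.) -/

import Mathlib

inductive PTree : Type where
  | node : List PTree → PTree

namespace PTree

/-- the single-vertex tree -/
def x : PTree := node []

/-- the number of leaves of a tree -/
def deg : PTree → ℕ
  | node l => max 1 (l.attach.map fun t => deg t.1).sum
decreasing_by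
  have := List.sizeOf_lt_of_mem t.2
  simp; omega

/-- a tree is reduced if no vertex has arity 1 -/
inductive Reduced : PTree → Prop where
  | node (l : List PTree) (hlen : l.length ≠ 1) (h : ∀ t ∈ l, Reduced t) :
      Reduced (node l)

/-- the reduction of a tree -/
def red : PTree → PTree
  | node [t] => red t
  | node l => node (l.attach.map fun t => red t.1)
decreasing_by
  · simp; omega
  · have := List.sizeOf_lt_of_mem t.2
    simp; omega

mutual
/-- the spanning subtree `T_I` determined by a set `I ⊆ range (deg T)` of leaf positions
(counted from the left, starting at `0`) -/
def sub : PTree → Finset ℕ → PTree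
  | node l, I => node (subList l I)
/-- auxiliary: the list of spanning subtrees of the children, children without
selected leaves being dropped -/
def subList : List PTree → Finset ℕ → List PTree
  | [], _ => []
  | t :: ts, I =>
      (if (I.filter (· < t.deg)).Nonempty then [sub t (I.filter (· < t.deg))] else [])
        ++ subList ts ((I.filter fun j => t.deg ≤ j).image fun j => j - t.deg)
end

/-- the contraction `T|I`: the reduction of the spanning subtree, `1` (i.e. `none`) if `I = ∅` -/
def contract (T : PTree) (I : Finset ℕ) : Option PTree :=
  if I = ∅ then none else some (red (sub T I))

end PTree

/-- `PRT'`: finite planar rooted trees together with the empty tree `1 = none` -/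
abbrev OT := Option PTree

/-- `deg` on `PRT'` -/
def degO (o : OT) : ℕ := o.elim 0 PTree.deg

/-- membership in `PRT'` = reduced trees together with the empty tree `1` -/
def ROT (o : OT) : Prop := ∀ t, o = some t → t.Reduced

/-- contraction on `PRT'` -/
def contractO : OT → Finset ℕ → OT
  | none, _ => none
  | some t, I => PTree.contract t I

open Classical in
/-- `N_{S,T}(V)` as a finite set of subsets of the set of leaf positions of `V` -/
noncomputable def NFinset (S T V : OT) : Finset (Finset ℕ) :=
  (Finset.range (degO V)).powerset.filter fun I =>
    contractO V I = S ∧ contractO V (Finset.range (degO V) \ I) = T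

/-- `#N_{S,T}(V)` -/
noncomputable def Ncount (S T V : OT) : ℕ := (NFinset S T V).card

/-- the binomial coefficient `C(q,m) = q(q-1)⋯(q-m+1)/m!` in `ℚ(q)` -/
noncomputable def qChoose (m : ℕ) : RatFunc ℚ :=
  (∏ i ∈ Finset.range m, (RatFunc.X - (i : RatFunc ℚ))) / (m.factorial : RatFunc ℚ)

/-- the coefficients `a(T)` of the generic planar exponential series `EXP`:
`a(x) = 1` and `a(T) = (C(q,m)/(q^n - q))·a(T_1)⋯a(T_m)` for `T = node [T_1,…,T_m]`
of arity `m ≥ 2` and degree `n = deg T` (junk values on non-reduced trees) -/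
noncomputable def PTree.aTree : PTree → RatFunc ℚ
  | .node [] => 1
  | .node l =>
      (qChoose l.length / (RatFunc.X ^ (PTree.node l).deg - RatFunc.X)) *
        (l.attach.map fun t => aTree t.1).prod
decreasing_by
  have := List.sizeOf_lt_of_mem t.2
  simp; omega

/-- `a` on `PRT'`, with `a(1) = 1` -/
noncomputable def aCoeff (o : OT) : RatFunc ℚ := o.elim 1 PTree.aTree


open Finset

namespace PTree

theorem indNode {P : PTree → Prop} (h : ∀ l, (∀ t ∈ l, P t) → P (node l)) : ∀ t, P t
  | node l => h l (fun t ht => indNode h t)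
decreasing_by
  have := List.sizeOf_lt_of_mem ht
  simp; omega

/-- total degree of a list of trees -/
def degs (l : List PTree) : ℕ := (l.map deg).sum

@[simp] theorem degs_nil : degs [] = 0 := rfl
@[simp] theorem degs_cons (t : PTree) (l : List PTree) : degs (t :: l) = deg t + degs l := by
  simp [degs]

theorem deg_node (l : List PTree) : deg (node l) = max 1 (degs l) := by
  rw [deg, degs]
  congr 2
  exact List.attach_map_val (f := deg)

theorem deg_pos (t : PTree) : 1 ≤ deg t := by
  cases t with
  | node l => rw [deg_node]; omega

theorem length_le_degs (l : List PTree) : l.length ≤ degs l := by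
  induction l with
  | nil => simp
  | cons t l ih => have := deg_pos t; simp; omega

theorem deg_node_of_ne {l : List PTree} (h : l ≠ []) : deg (node l) = degs l := by
  have := length_le_degs l
  have := List.length_pos_iff.2 h
  rw [deg_node]; omega

theorem deg_le_degs {t : PTree} {l : List PTree} (h : t ∈ l) : deg t ≤ degs l :=
  List.le_sum_of_mem (List.mem_map_of_mem h)

theorem deg_add_length_le {t : PTree} {l : List PTree} (h : t ∈ l) :
    deg t + l.length ≤ degs l + 1 := by
  induction l with
  | nil => simp at h
  | cons s l ih =>
    rcases List.mem_cons.1 h with rfl | h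
    · have := length_le_degs l; simp; omega
    · have := ih h; have := deg_pos s; simp; omega

theorem red_single (t : PTree) : red (node [t]) = red t := by
  rw [red]

theorem red_node {l : List PTree} (h : l.length ≠ 1) : red (node l) = node (l.map red) := by
  rw [red]
  · congr 1
    exact List.attach_map_val (f := red)
  · rintro t rfl; simp at h

theorem deg_red : ∀ t, deg (red t) = deg t := by
  apply indNode
  intro l ih
  by_cases h : l.length = 1
  · obtain ⟨t, rfl⟩ := List.length_eq_one_iff.1 h
    have := deg_pos t
    rw [red_single, ih t (by simp), deg_node]; simp; omega
  · rw [red_node h, deg_node, deg_node]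
    congr 1
    simp only [degs, List.map_map]
    congr 1
    exact List.map_congr_left (fun t ht => ih t ht)

/-- first part of the leaf set -/
def lo (d : ℕ) (I : Finset ℕ) : Finset ℕ := I.filter (· < d)
/-- second part of the leaf set -/
def hi (d : ℕ) (I : Finset ℕ) : Finset ℕ := (I.filter fun j => d ≤ j).image fun j => j - d

theorem mem_lo {d j : ℕ} {I : Finset ℕ} : j ∈ lo d I ↔ j ∈ I ∧ j < d := by simp [lo]
theorem mem_hi {d j : ℕ} {I : Finset ℕ} : j ∈ hi d I ↔ d + j ∈ I := by
  simp only [hi, mem_image, mem_filter]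
  constructor
  · rintro ⟨a, ⟨h1, h2⟩, rfl⟩
    rwa [Nat.add_sub_cancel' h2]
  · intro h
    exact ⟨d + j, ⟨h, by omega⟩, by omega⟩

theorem card_lo_hi (d : ℕ) (I : Finset ℕ) : (lo d I).card + (hi d I).card = I.card := by
  rw [hi, card_image_of_injOn, lo]
  · simp_rw [← not_lt]
    exact card_filter_add_card_filter_not _
  · intro a ha b hb h
    simp at ha hb h
    omega

theorem subList_cons (t : PTree) (l : List PTree) (I : Finset ℕ) :
    subList (t :: l) I = (if (lo t.deg I).Nonempty then [sub t (lo t.deg I)] else [])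
        ++ subList l (hi t.deg I) := by
  rw [subList]; rfl

theorem sub_node (l : List PTree) (I : Finset ℕ) : sub (node l) I = node (subList l I) := by
  rw [sub]

theorem hi_subset {d e : ℕ} {I : Finset ℕ} (h : I ⊆ range (d + e)) : hi d I ⊆ range e := by
  intro j hj
  have := h (mem_hi.1 hj)
  simp at this ⊢; omega

theorem lo_subset {d : ℕ} {I : Finset ℕ} : lo d I ⊆ range d := by
  intro j hj
  simpa using (mem_lo.1 hj).2

theorem degs_append (l m : List PTree) : degs (l ++ m) = degs l + degs m := by
  simp [degs]

theorem degs_subList (l : List PTree) (h : ∀ t ∈ l, ∀ I : Finset ℕ, I ⊆ range (deg t) →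
    I.Nonempty → deg (sub t I) = I.card) : ∀ I : Finset ℕ, I ⊆ range (degs l) →
    degs (subList l I) = I.card := by
  induction l with
  | nil => intro I hI; simp at hI; subst hI; simp [subList]
  | cons t l ih =>
    intro I hI
    rw [degs_cons] at hI
    rw [subList_cons, degs_append, ih (fun t ht => h t (by simp [ht])) _ (hi_subset hI),
      ← card_lo_hi t.deg I]
    congr 1
    split_ifs with h1
    · simp [h t (by simp) _ lo_subset h1]
    · rw [not_nonempty_iff_eq_empty] at h1
      simp [h1]

theorem deg_sub : ∀ t, ∀ I : Finset ℕ, I ⊆ range (deg t) → I.Nonempty →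
    deg (sub t I) = I.card := by
  apply indNode
  intro l ih I hI hne
  have hc := hne.card_pos
  rw [sub_node, deg_node]
  by_cases h : l = []
  · subst h
    have : I.card ≤ 1 := by simpa [deg_node] using card_le_card hI
    simp [subList]; omega
  · rw [deg_node_of_ne h] at hI
    rw [degs_subList l ih I hI]; omega

theorem degO_contract (t : PTree) (I : Finset ℕ) (hI : I ⊆ range (deg t)) :
    degO (contract t I) = I.card := by
  unfold contract
  split_ifs with h
  · simp [h, degO]
  · simp [degO, deg_red, deg_sub t I hI (nonempty_iff_ne_empty.2 h)]

end PTree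

open PTree

theorem deg_of_Ncount_ne {V W : OT} {T : PTree} (h : Ncount V W (some T) ≠ 0) :
    T.deg = degO V + degO W := by
  classical
  rw [Ncount, card_ne_zero] at h
  obtain ⟨I, hI⟩ := h
  rw [NFinset, mem_filter, mem_powerset] at hI
  obtain ⟨h1, rfl, rfl⟩ := hI
  change I ⊆ range T.deg at h1
  change _ = degO (T.contract I) + degO (T.contract (range T.deg \ I))
  rw [degO_contract _ _ h1, degO_contract _ _ sdiff_subset, card_sdiff_of_subset h1, card_range]
  have := card_le_card h1
  simp at this; omega

namespace PTree
/-- contraction of a forest -/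
def cl (l : List PTree) (I : Finset ℕ) : List PTree := (subList l I).map red

theorem cl_nil (I : Finset ℕ) : cl [] I = [] := by simp [cl, subList]

theorem cl_cons (t : PTree) (l : List PTree) (I : Finset ℕ) :
    cl (t :: l) I = (contract t (lo t.deg I)).toList ++ cl l (hi t.deg I) := by
  rw [cl, subList_cons, contract, List.map_append, ← cl]
  congr 1
  by_cases h : lo t.deg I = ∅
  · simp [h]
  · simp [h, nonempty_iff_ne_empty]

/-- grafting with unit -/
def graft : List PTree → OT
  | [] => none
  | [t] => some t
  | l => some (node l)

open Classical in
/-- decompositions -/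
noncomputable def D : OT → Finset (List PTree)
  | none => {[]}
  | some (node l) => if 2 ≤ l.length then {[node l], l} else {[node l]}

theorem mem_D {V : OT} {γ : List PTree} : γ ∈ D V ↔ graft γ = V := by
  rcases V with _ | ⟨⟨l⟩⟩
  · rcases γ with _ | ⟨a, _ | ⟨b, γ⟩⟩ <;> simp [D, graft]
  · rcases γ with _ | ⟨a, _ | ⟨b, γ⟩⟩
    · simp only [D, graft]; split_ifs with h
      · rcases l with _ | ⟨c, l⟩ <;> simp at h ⊢
      · simp
    · simp only [D, graft]; split_ifs with h
      · simp; rintro rfl; simp at h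
      · simp
    · simp only [D, graft]; split_ifs with h
      · simp
      · simp; rintro rfl; simp at h

theorem contract_node {l : List PTree} (hl : l ≠ []) {I : Finset ℕ} (hI : I ⊆ range (degs l)) :
    contract (node l) I = graft (cl l I) := by
  have hc := degs_subList l (fun t _ => deg_sub t) I hI
  rw [contract, sub_node]
  unfold cl
  generalize subList l I = L at *
  rcases L with _ | ⟨a, _ | ⟨b, L⟩⟩
  · have : I = ∅ := by simpa [eq_comm] using hc
    simp [this, graft]
  · have : I ≠ ∅ := by
      rintro rfl
      have := deg_pos a
      simp at hc; omega
    simp [this, graft, red_single]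
  · have : I ≠ ∅ := by
      rintro rfl
      have := deg_pos a
      simp at hc; omega
    simp [this, graft, red_node]

open Classical in
/-- forest count -/
noncomputable def nc (l α β : List PTree) : ℕ :=
  ((range (degs l)).powerset.filter fun I =>
    cl l I = α ∧ cl l (range (degs l) \ I) = β).card

theorem Ncount_node (V W : OT) {l : List PTree} (hl : l ≠ []) :
    Ncount V W (some (node l)) = ∑ α ∈ D V, ∑ β ∈ D W, nc l α β := by
  classical
  simp_rw [Ncount, NFinset, nc, card_filter]
  simp_rw [sum_comm (s := D W)]
  rw [sum_comm]
  change ∑ I ∈ (range (node l).deg).powerset, _ = _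
  rw [deg_node_of_ne hl]
  refine sum_congr rfl fun I hI => ?_
  rw [mem_powerset] at hI
  change (if contract (node l) I = V ∧ contract (node l) (range (node l).deg \ I) = W
    then 1 else 0) = _
  rw [deg_node_of_ne hl, contract_node hl hI, contract_node hl sdiff_subset,
    if_congr (and_congr mem_D.symm mem_D.symm) rfl rfl]
  simp_rw [ite_and]
  by_cases h1 : cl l I ∈ D V <;> by_cases h2 : cl l (range (degs l) \ I) ∈ D W <;>
    simp [h1, h2]

open Classical in
/-- head splittings -/
noncomputable def Sp : List PTree → Finset (OT × List PTree)
  | [] => {(none, [])}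
  | a :: α => {(none, a :: α), (some a, α)}

theorem mem_Sp {α γ : List PTree} {o : OT} : (o, γ) ∈ Sp α ↔ o.toList ++ γ = α := by
  rcases α with _ | ⟨a, α⟩ <;> rcases o with _ | o <;> simp [Sp]

open Classical in
theorem sum_split {M : Type*} [AddCommMonoid M] (d e : ℕ)
    (F : Finset ℕ → Finset ℕ → M) :
    ∑ I ∈ (range (d + e)).powerset, F (lo d I) (hi d I) =
      ∑ I ∈ (range d).powerset, ∑ J ∈ (range e).powerset, F I J := by
  rw [← sum_product']
  refine sum_nbij' (fun I => (lo d I, hi d I)) (fun p => p.1 ∪ p.2.image (d + ·)) ?_ ?_ ?_ ?_ ?_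
  · intro I hI
    rw [mem_powerset] at hI
    simp only [mem_product, mem_powerset]
    exact ⟨lo_subset, hi_subset hI⟩
  · intro p hp
    simp only [mem_product, mem_powerset, subset_iff, mem_range, mem_union, mem_image] at hp ⊢
    rintro j (h | ⟨k, h, rfl⟩)
    · have := hp.1 h; omega
    · have := hp.2 h; omega
  · intro I hI
    ext j
    simp only [mem_union, mem_image, mem_lo, mem_hi]
    constructor
    · rintro (h | ⟨k, h, rfl⟩)
      · exact h.1
      · exact h
    · intro h
      by_cases hj : j < d
      · exact Or.inl ⟨h, hj⟩
      · exact Or.inr ⟨j - d, by rwa [Nat.add_sub_cancel' (by omega)], by omega⟩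
  · rintro ⟨I, J⟩ hp
    simp only [mem_product, mem_powerset, subset_iff, mem_range] at hp
    ext j
    · simp only [mem_lo, mem_union, mem_image]
      constructor
      · rintro ⟨h | ⟨k, h, rfl⟩, h2⟩
        · exact h
        · omega
      · intro h; exact ⟨Or.inl h, hp.1 h⟩
    · simp only [mem_hi, mem_union, mem_image]
      constructor
      · rintro (h | ⟨k, h, h2⟩)
        · have := hp.1 h; omega
        · have : k = j := by omega
          rwa [← this]
      · intro h; exact Or.inr ⟨j, h, rfl⟩
  · intro I hI; rfl

theorem lo_compl (d e : ℕ) (I : Finset ℕ) :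
    lo d (range (d + e) \ I) = range d \ lo d I := by
  ext j; simp only [mem_lo, mem_sdiff, mem_range]
  constructor
  · rintro ⟨⟨_, h⟩, h2⟩; exact ⟨h2, fun h3 => h h3.1⟩
  · rintro ⟨h, h2⟩; exact ⟨⟨by omega, fun h3 => h2 ⟨h3, h⟩⟩, h⟩

theorem hi_compl (d e : ℕ) (I : Finset ℕ) :
    hi d (range (d + e) \ I) = range e \ hi d I := by
  ext j; simp [mem_hi]

theorem nc_nil (α β : List PTree) [Decidable (α = [] ∧ β = [])] :
    nc [] α β = if α = [] ∧ β = [] then 1 else 0 := by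
  classical
  simp only [nc, cl_nil, card_filter, degs_nil, range_zero, powerset_empty, sum_singleton]
  by_cases h1 : α = [] <;> by_cases h2 : β = [] <;> simp [h1, h2, eq_comm]

theorem nc_cons (t : PTree) (l α β : List PTree) :
    nc (t :: l) α β = ∑ s ∈ Sp α, ∑ r ∈ Sp β, Ncount s.1 r.1 (some t) * nc l s.2 r.2 := by
  classical
  have key := sum_split t.deg (degs l) (fun I J => 
    if (contract t I).toList ++ cl l J = α ∧
      (contract t (range t.deg \ I)).toList ++ cl l (range (degs l) \ J) = β then 1 else 0)
  have e1 : nc (t :: l) α β = ∑ I ∈ (range (t.deg + degs l)).powerset,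
    if (contract t (lo t.deg I)).toList ++ cl l (hi t.deg I) = α ∧
      (contract t (range t.deg \ lo t.deg I)).toList ++ 
        cl l (range (degs l) \ hi t.deg I) = β then 1 else 0 := by
    rw [nc, card_filter, degs_cons]
    refine sum_congr rfl fun I hI => ?_
    rw [cl_cons, cl_cons, lo_compl, hi_compl]
  rw [e1, key]
  have e2 : ∀ s r : OT × List PTree, Ncount s.1 r.1 (some t) * nc l s.2 r.2 = 
      ∑ I ∈ (range t.deg).powerset, ∑ J ∈ (range (degs l)).powerset,
        if s = (contract t I, cl l J) ∧ 
          r = (contract t (range t.deg \ I), cl l (range (degs l) \ J)) then 1 else 0 := by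
    rintro ⟨o, γ⟩ ⟨p, δ⟩
    rw [Ncount, NFinset, nc, card_filter, card_filter, sum_mul_sum]
    refine sum_congr rfl fun I hI => sum_congr rfl fun J hJ => ?_
    change (if contract t I = o ∧ contract t (range t.deg \ I) = p then 1 else 0) * _ = _
    rw [ite_zero_mul_ite_zero, mul_one]
    refine if_congr ?_ rfl rfl
    simp only [Prod.mk.injEq]
    constructor
    · rintro ⟨⟨rfl, rfl⟩, rfl, rfl⟩; simp
    · rintro ⟨⟨rfl, rfl⟩, rfl, rfl⟩; simp
  simp_rw [e2]
  simp_rw [sum_comm (s := Sp β)]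
  rw [sum_comm (s := Sp α)]
  refine sum_congr rfl fun I hI => ?_
  rw [sum_comm (s := Sp α)]
  refine sum_congr rfl fun J hJ => ?_
  rw [if_congr (and_congr mem_Sp.symm mem_Sp.symm) rfl rfl]
  simp_rw [ite_and]
  by_cases h1 : (contract t I, cl l J) ∈ Sp α <;> 
    by_cases h2 : (contract t (range t.deg \ I), cl l (range (degs l) \ J)) ∈ Sp β <;>
    simp [h1, h2]

end PTree

namespace PTree

/-- number of ways to cover an `m`-set by a `k`-set and an `l`-set -/
def cv : ℕ → ℕ → ℕ → ℕ
  | 0, 0, 0 => 1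
  | 0, _, _ => 0
  | _ + 1, 0, 0 => 0
  | m + 1, k + 1, 0 => cv m k 0
  | m + 1, 0, l + 1 => cv m 0 l
  | m + 1, k + 1, l + 1 => cv m k (l + 1) + cv m (k + 1) l + cv m k l

theorem choose_mul_choose (N : ℕ) : ∀ k l M : ℕ, k + l ≤ M →
    N.choose k * N.choose l = ∑ m ∈ range (M + 1), N.choose m * cv m k l := by
  induction N with
  | zero =>
    intro k l M h
    rw [sum_range_succ']
    rcases k with _ | k <;> rcases l with _ | l <;> simp [cv]
  | succ N ih =>
    intro k l M h
    have e : ∑ m ∈ range (M + 1), (N + 1).choose m * cv m k l =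
        ∑ m ∈ range (M + 1), N.choose m * cv m k l +
          ∑ m ∈ range M, N.choose m * cv (m + 1) k l := by
      rw [sum_range_succ', sum_range_succ']
      simp_rw [Nat.choose_succ_succ, add_mul, sum_add_distrib]
      simp; ring
    rw [e, ← ih k l M h]
    rcases k with _ | k <;> rcases l with _ | l
    · simp [cv]
    · obtain ⟨M, rfl⟩ : ∃ M', M = M' + 1 := ⟨M - 1, by omega⟩
      simp only [cv]
      rw [← ih 0 l M (by omega)]
      simp [Nat.choose_succ_succ]; ring
    · obtain ⟨M, rfl⟩ : ∃ M', M = M' + 1 := ⟨M - 1, by omega⟩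
      simp only [cv]
      rw [← ih k 0 M (by omega)]
      simp [Nat.choose_succ_succ]; ring
    · obtain ⟨M, rfl⟩ : ∃ M', M = M' + 1 := ⟨M - 1, by omega⟩
      simp only [cv, mul_add, sum_add_distrib]
      rw [← ih k l M (by omega), ← ih k (l + 1) M (by omega), ← ih (k + 1) l M (by omega)]
      simp [Nat.choose_succ_succ]; ring

/-- binomial polynomial -/
noncomputable def binP (m : ℕ) : Polynomial ℚ :=
  Polynomial.C ((m.factorial : ℚ)⁻¹) * descPochhammer ℚ m

theorem binP_eval (m N : ℕ) : (binP m).eval (N : ℚ) = N.choose m := by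
  have : (m.factorial : ℚ) ≠ 0 := by exact_mod_cast m.factorial_ne_zero
  rw [binP, Polynomial.eval_mul, Polynomial.eval_C, descPochhammer_eval_eq_descFactorial,
    Nat.descFactorial_eq_factorial_mul_choose]
  push_cast
  field_simp

theorem qChoose_eq (m : ℕ) : qChoose m = algebraMap (Polynomial ℚ) (RatFunc ℚ) (binP m) := by
  rw [qChoose, binP, map_mul, div_eq_mul_inv, mul_comm]
  congr 1
  · simp [RatFunc.algebraMap_C]
  · induction m with
    | zero => simp
    | succ m ih => rw [prod_range_succ, ih, descPochhammer_succ_right, map_mul]; simp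

theorem qChoose_mul_qChoose (k l M : ℕ) (h : k + l ≤ M) :
    qChoose k * qChoose l = ∑ m ∈ range (M + 1), qChoose m * (cv m k l : RatFunc ℚ) := by
  have key : binP k * binP l = ∑ m ∈ range (M + 1), binP m * (cv m k l : Polynomial ℚ) := by
    apply Polynomial.eq_of_infinite_eval_eq
    refine (Set.infinite_range_of_injective (Nat.cast_injective (R := ℚ))).mono ?_
    rintro _ ⟨N, rfl⟩
    simp only [Set.mem_ofPred_eq, Polynomial.eval_mul, Polynomial.eval_finset_sum, binP_eval,
      Polynomial.eval_natCast]
    exact_mod_cast choose_mul_choose N k l M h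
  simp_rw [qChoose_eq]
  rw [← map_mul, key, map_sum]
  simp

open Classical in
/-- the noncommutative convolution power -/
noncomputable def E (f : OT → OT → RatFunc ℚ) : ℕ → List PTree → List PTree → RatFunc ℚ
  | 0, α, β => if α = [] ∧ β = [] then 1 else 0
  | m + 1, α, β => ∑ s ∈ Sp α, ∑ r ∈ Sp β, f s.1 r.1 * E f m s.2 r.2

open Classical in
/-- lists of length `m` with entries in `R` -/
noncomputable def Ls (R : Finset PTree) : ℕ → Finset (List PTree)
  | 0 => {[]}
  | m + 1 => (R ×ˢ Ls R m).image fun p => p.1 :: p.2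

theorem mem_Ls {R : Finset PTree} {m : ℕ} {l : List PTree} :
    l ∈ Ls R m ↔ l.length = m ∧ ∀ t ∈ l, t ∈ R := by
  induction m generalizing l with
  | zero => 
    simp only [Ls, mem_singleton, List.length_eq_zero_iff]
    constructor
    · rintro rfl; simp
    · exact fun h => h.1
  | succ m ih =>
    rcases l with _ | ⟨a, l⟩
    · simp [Ls]
    · simp [Ls, ih]; tauto

theorem sum_Ls_succ (R : Finset PTree) (m : ℕ) (F : List PTree → RatFunc ℚ) :
    ∑ l ∈ Ls R (m + 1), F l = ∑ t ∈ R, ∑ l ∈ Ls R m, F (t :: l) := by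
  classical
  rw [Ls, sum_image, sum_product]
  rintro ⟨a, l⟩ _ ⟨b, l'⟩ _ h
  simpa using h

theorem fin_red (d : ℕ) : {t : PTree | Reduced t ∧ deg t ≤ d}.Finite := by
  classical
  induction d with
  | zero =>
    convert Set.finite_empty
    ext t
    have := deg_pos t
    simp; omega
  | succ d ih =>
    refine (((range (d + 2)).biUnion (Ls ih.toFinset)).image node).finite_toSet.subset ?_
    rintro ⟨l⟩ ⟨⟨_, hl, h⟩, hd⟩
    simp only [coe_image, Set.mem_image, SetLike.mem_coe, mem_biUnion]
    refine ⟨l, ⟨l.length, ?_, ?_⟩, rfl⟩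
    · have := length_le_degs l
      rw [deg_node] at hd
      simp; omega
    · rw [mem_Ls]
      refine ⟨rfl, fun t ht => ?_⟩
      have := deg_add_length_le ht
      have : 0 < l.length := List.length_pos_of_mem ht
      rw [deg_node] at hd
      simp only [Set.Finite.mem_toFinset, Set.mem_ofPred_eq]
      exact ⟨h t ht, by omega⟩

/-- reduced trees of bounded degree -/
noncomputable def Rd (d : ℕ) : Finset PTree := (fin_red d).toFinset

theorem mem_Rd {d : ℕ} {t : PTree} : t ∈ Rd d ↔ Reduced t ∧ deg t ≤ d := by simp [Rd]

/-- left-hand side coefficients -/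
noncomputable def g (R : Finset PTree) (V W : OT) : RatFunc ℚ :=
  ∑ T ∈ R, aTree T * (Ncount V W (some T) : RatFunc ℚ)

open Classical in
/-- right-hand side coefficients -/
noncomputable def hh (V W : OT) : RatFunc ℚ :=
  if V = none ∧ W = none then 0 else aCoeff V * aCoeff W

theorem E_g (R : Finset PTree) (m : ℕ) (α β : List PTree) :
    ∑ l ∈ Ls R m, (l.map aTree).prod * (nc l α β : RatFunc ℚ) = E (g R) m α β := by
  classical
  induction m generalizing α β with
  | zero => 
    simp only [Ls, sum_singleton, nc_nil, E]
    split_ifs <;> simp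
  | succ m ih =>
    simp only [E]
    rw [sum_Ls_succ]
    simp_rw [← ih, g, sum_mul_sum, nc_cons]
    push_cast
    simp_rw [mul_sum]
    simp_rw [sum_comm (s := Sp β)]
    rw [sum_comm (s := Sp α)]
    refine sum_congr rfl fun t _ => ?_
    rw [sum_comm (s := Sp α)]
    refine sum_congr rfl fun l _ => ?_
    refine sum_congr rfl fun s _ => sum_congr rfl fun r _ => ?_
    simp only [List.map_cons, List.prod_cons]
    ring

theorem E_hh (m : ℕ) (α β : List PTree) :
    E hh m α β = cv m α.length β.length * (α.map aTree).prod * (β.map aTree).prod := by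
  classical
  induction m generalizing α β with
  | zero => 
    rcases α with _ | ⟨a, α⟩ <;> rcases β with _ | ⟨b, β⟩ <;> simp [E, cv]
  | succ m ih =>
    simp only [E]
    rcases α with _ | ⟨a, α⟩ <;> rcases β with _ | ⟨b, β⟩
    · simp [Sp, hh, cv]
    · simp [Sp, hh, cv, ih, aCoeff]; ring
    · simp [Sp, hh, cv, ih, aCoeff]; ring
    · simp [Sp, hh, cv, ih, aCoeff]; ring

theorem aTree_node {l : List PTree} (h : l ≠ []) : aTree (node l) =
    (qChoose l.length / (RatFunc.X ^ (degs l) - RatFunc.X)) * (l.map aTree).prod := by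
  rw [aTree, deg_node_of_ne h]
  · congr 2
    exact List.attach_map_val (f := aTree)
  · exact h

theorem aTree_x : aTree (node []) = 1 := by rw [aTree]

theorem X_pow_sub_ne {n : ℕ} (h : 2 ≤ n) : (RatFunc.X ^ n - RatFunc.X : RatFunc ℚ) ≠ 0 := by
  intro h0
  rw [sub_eq_zero, ← RatFunc.algebraMap_X, ← map_pow] at h0
  have := congrArg Polynomial.natDegree (RatFunc.algebraMap_injective ℚ h0)
  simp at this
  omega

theorem qChoose_zero : qChoose 0 = 1 := by simp [qChoose]
theorem qChoose_one : qChoose 1 = RatFunc.X := by simp [qChoose]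

theorem sum_D (V : OT) (hV : ROT V) :
    ∑ α ∈ D V, qChoose α.length * (α.map aTree).prod = RatFunc.X ^ degO V * aCoeff V := by
  classical
  rcases V with _ | ⟨⟨l⟩⟩
  · simp [D, qChoose_zero, degO, aCoeff]
  · have hr := hV _ rfl
    obtain ⟨_, hl, h⟩ := hr
    simp only [D]
    split_ifs with h2
    · have hne : l ≠ [] := by rintro rfl; simp at h2
      have hX := X_pow_sub_ne (h2.trans (length_le_degs l))
      rw [sum_pair (fun h3 => by rw [← h3] at h2; simp at h2)]
      simp [qChoose_one, degO, aCoeff, deg_node_of_ne hne]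
      rw [aTree_node hne]
      field_simp
      ring
    · have : l = [] := by
        rw [← List.length_eq_zero_iff]; omega
      subst this
      simp [qChoose_one, degO, aCoeff, deg_node, aTree_x]

open Classical in
theorem sum_D_Sp (V : OT) (F : OT → RatFunc ℚ) :
    ∑ α ∈ D V, ∑ s ∈ Sp α, (if s.2 = [] then F s.1 else 0) = F V := by
  rcases V with _ | ⟨⟨l⟩⟩
  · simp [D, Sp]
  · simp only [D]
    split_ifs with h2
    · rw [sum_pair (fun h3 => by rw [← h3] at h2; simp at h2)]
      rcases l with _ | ⟨a, _ | ⟨b, l⟩⟩ <;> simp at h2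
      simp [Sp]
    · simp [Sp]

theorem sum_D_one (f : OT → OT → RatFunc ℚ) (V W : OT) :
    ∑ α ∈ D V, ∑ β ∈ D W, E f 1 α β = f V W := by
  classical
  rw [← sum_D_Sp V (fun o => f o W)]
  refine sum_congr rfl fun α _ => ?_
  simp only [E]
  rw [sum_comm]
  refine sum_congr rfl fun s _ => ?_
  rw [← sum_D_Sp W (fun o => f s.1 o)]
  by_cases h : s.2 = []
  · simp [h]
  · simp [h]

theorem Sp_facts {α : List PTree} {s : OT × List PTree} (h : s ∈ Sp α) :
    degO s.1 + degs s.2 = degs α ∧ 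
      ((∀ t ∈ α, Reduced t) → ROT s.1 ∧ ∀ t ∈ s.2, Reduced t) := by
  obtain ⟨o, γ⟩ := s
  rw [mem_Sp] at h
  subst h
  rcases o with _ | o
  · simp [degO, ROT]
  · simp [degO, ROT]

theorem degO_eq_zero {o : OT} (h : degO o = 0) : o = none := by
  rcases o with _ | t
  · rfl
  · have := deg_pos t
    simp [degO] at h; omega

theorem degs_eq_zero {l : List PTree} (h : degs l = 0) : l = [] := by
  have := length_le_degs l
  exact List.length_eq_zero_iff.1 (by omega)

theorem E_nil_nil (f : OT → OT → RatFunc ℚ) (hf : f none none = 0) (m : ℕ) :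
    E f (m + 1) [] [] = 0 := by
  simp [E, Sp, hf]

theorem E_congr_lt {n : ℕ} {f f' : OT → OT → RatFunc ℚ}
    (H : ∀ V W, ROT V → ROT W → degO V + degO W < n → f V W = f' V W) (m : ℕ)
    (α β : List PTree) (hα : ∀ t ∈ α, Reduced t) (hβ : ∀ t ∈ β, Reduced t)
    (hn : degs α + degs β < n) : E f m α β = E f' m α β := by
  induction m generalizing α β with
  | zero => rfl
  | succ m ih =>
    simp only [E]
    refine sum_congr rfl fun s hs => sum_congr rfl fun r hr => ?_
    obtain ⟨h1, h2⟩ := Sp_facts hs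
    obtain ⟨h3, h4⟩ := Sp_facts hr
    rw [H _ _ (h2 hα).1 (h4 hβ).1 (by omega), ih _ _ (h2 hα).2 (h4 hβ).2 (by omega)]

theorem E_congr_le {n : ℕ} {f f' : OT → OT → RatFunc ℚ}
    (H : ∀ V W, ROT V → ROT W → degO V + degO W < n → f V W = f' V W)
    (hf : f none none = 0) (hf' : f' none none = 0) (m : ℕ)
    (α β : List PTree) (hα : ∀ t ∈ α, Reduced t) (hβ : ∀ t ∈ β, Reduced t)
    (hn : degs α + degs β ≤ n) : E f (m + 2) α β = E f' (m + 2) α β := by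
  rw [E, E]
  refine sum_congr rfl fun s hs => sum_congr rfl fun r hr => ?_
  obtain ⟨h1, h2⟩ := Sp_facts hs
  obtain ⟨h3, h4⟩ := Sp_facts hr
  by_cases c1 : degs s.2 + degs r.2 = 0
  · rw [degs_eq_zero (l := s.2) (by omega), degs_eq_zero (l := r.2) (by omega),
      E_nil_nil f hf, E_nil_nil f' hf', mul_zero, mul_zero]
  by_cases c2 : degO s.1 + degO r.1 = 0
  · rw [degO_eq_zero (o := s.1) (by omega), degO_eq_zero (o := r.1) (by omega), hf, hf',
      zero_mul, zero_mul]
  rw [H _ _ (h2 hα).1 (h4 hβ).1 (by omega), 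
    E_congr_lt H _ _ _ (h2 hα).2 (h4 hβ).2 (by omega)]

theorem D_facts {V : OT} {α : List PTree} (h : α ∈ D V) (hV : ROT V) :
    degs α = degO V ∧ ∀ t ∈ α, Reduced t := by
  rw [mem_D] at h
  subst h
  rcases α with _ | ⟨a, _ | ⟨b, α⟩⟩
  · simp [graft, degO]
  · have := hV _ rfl
    simpa [graft, degO] using this
  · have := hV _ rfl
    refine ⟨?_, ?_⟩
    · change _ = degO (some (node (a :: b :: α)))
      rw [degO, Option.elim_some, deg_node_of_ne (by simp)]
    · obtain ⟨_, _, h⟩ := this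
      exact h

theorem g_none (R : Finset PTree) : g R none none = 0 := by
  rw [g]
  refine sum_eq_zero fun T _ => ?_
  have : Ncount none none (some T) = 0 := by
    by_contra h
    have h1 := deg_of_Ncount_ne h
    have := deg_pos T
    simp [degO] at h1; omega
  simp [this]

theorem hh_none : hh none none = 0 := by simp [hh]

end PTree

namespace PTree

theorem hh_rec (D' : ℕ) (V W : OT) (hV : ROT V) (hW : ROT W) (h2 : 2 ≤ degO V + degO W)
    (hd : degO V + degO W ≤ D' + 1) :
    (RatFunc.X ^ (degO V + degO W) - RatFunc.X) * hh V W =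
      ∑ m ∈ range D', qChoose (m + 2) * ∑ α ∈ D V, ∑ β ∈ D W, E hh (m + 2) α β := by
  classical
  have hne : ¬ (V = none ∧ W = none) := by
    rintro ⟨rfl, rfl⟩; simp [degO] at h2
  have tot : RatFunc.X ^ (degO V + degO W) * hh V W =
      ∑ m ∈ range (D' + 2), qChoose m * ∑ α ∈ D V, ∑ β ∈ D W, E hh m α β := by
    have : RatFunc.X ^ (degO V + degO W) * hh V W =
        (RatFunc.X ^ degO V * aCoeff V) * (RatFunc.X ^ degO W * aCoeff W) := by
      rw [hh, if_neg hne]; ring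
    rw [this, ← sum_D V hV, ← sum_D W hW, sum_mul_sum]
    simp_rw [mul_sum]
    rw [sum_comm (s := range (D' + 2))]
    refine sum_congr rfl fun α hα => ?_
    rw [sum_comm (s := range (D' + 2))]
    refine sum_congr rfl fun β hβ => ?_
    have e1 := (D_facts hα hV).1
    have e2 := (D_facts hβ hW).1
    have l1 := length_le_degs α
    have l2 := length_le_degs β
    have := qChoose_mul_qChoose α.length β.length (D' + 1) (by omega)
    simp_rw [E_hh]
    calc _ = (qChoose α.length * qChoose β.length) * (α.map aTree).prod * (β.map aTree).prod := by
          ring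
      _ = _ := by
          rw [this, sum_mul, sum_mul]
          refine sum_congr rfl fun m _ => ?_
          ring
  rw [sub_mul, tot, sum_range_succ', sum_range_succ', sum_D_one, qChoose_one]
  have z : ∑ α ∈ D V, ∑ β ∈ D W, E hh 0 α β = 0 := by
    refine sum_eq_zero fun α hα => sum_eq_zero fun β hβ => ?_
    rw [E, if_neg]
    rintro ⟨rfl, rfl⟩
    rw [mem_D] at hα hβ
    exact hne ⟨hα.symm, hβ.symm⟩
  rw [z]
  ring

theorem g_rec (D' : ℕ) (V W : OT) (h2 : 2 ≤ degO V + degO W)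
    (hd : degO V + degO W ≤ D' + 1) :
    (RatFunc.X ^ (degO V + degO W) - RatFunc.X) * g (Rd (D' + 1)) V W =
      ∑ m ∈ range D', qChoose (m + 2) *
        ∑ α ∈ D V, ∑ β ∈ D W, E (g (Rd (D' + 1))) (m + 2) α β := by
  classical
  have hX := X_pow_sub_ne h2
  set R := Rd (D' + 1) with hR
  let U : Finset (List PTree) := (range D').biUnion (fun m => Ls R (m + 2))
  let F : PTree → RatFunc ℚ := fun T =>
    (RatFunc.X ^ (degO V + degO W) - RatFunc.X) * (aTree T * (Ncount V W (some T) : RatFunc ℚ))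
  have hF : ∀ T, T.deg ≠ degO V + degO W → F T = 0 := by
    intro T hT
    have : Ncount V W (some T) = 0 := by
      by_contra h
      exact hT (deg_of_Ncount_ne h)
    simp [F, this]
  have s1 : ∑ T ∈ R, F T = ∑ l ∈ U, F (node l) := by
    rw [← sum_image (s := U) (g := node) (f := F) (fun a _ b _ h => by simpa using h)]
    refine sum_congr_of_eq_on_inter ?_ ?_ (fun _ _ _ => rfl)
    · rintro ⟨l⟩ hT hnT
      apply hF
      intro hdeg
      apply hnT
      obtain ⟨⟨_, hl, h⟩, hle⟩ := mem_Rd.1 hT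
      have hne : l ≠ [] := by
        rintro rfl
        simp [deg_node] at hdeg; omega
      have hpos := List.length_pos_iff.2 hne
      rw [deg_node_of_ne hne] at hdeg hle
      have hlen := length_le_degs l
      simp only [U, mem_image, mem_biUnion, mem_range]
      refine ⟨l, ⟨l.length - 2, by omega, ?_⟩, rfl⟩
      rw [mem_Ls]
      refine ⟨by omega, fun t ht => mem_Rd.2 ⟨h t ht, ?_⟩⟩
      have := deg_le_degs ht
      omega
    · intro T hT hnT
      apply hF
      intro hdeg
      apply hnT
      simp only [U, mem_image, mem_biUnion, mem_range] at hT
      obtain ⟨l, ⟨m, hm, hl⟩, rfl⟩ := hT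
      rw [mem_Ls] at hl
      exact mem_Rd.2 ⟨Reduced.node l (by omega) fun t ht => (mem_Rd.1 (hl.2 t ht)).1, by omega⟩
  rw [g, mul_sum]
  change ∑ T ∈ R, F T = _
  rw [s1, sum_biUnion]
  · refine sum_congr rfl fun m _ => ?_
    simp_rw [← E_g]
    simp_rw [sum_comm (s := D W)]
    rw [sum_comm (s := D V), mul_sum]
    refine sum_congr rfl fun l hl => ?_
    have hlen := (mem_Ls.1 hl).1
    have hne : l ≠ [] := by rintro rfl; simp at hlen
    have hN : (∑ α ∈ D V, ∑ β ∈ D W, (l.map aTree).prod * (nc l α β : RatFunc ℚ)) =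
        (l.map aTree).prod * (Ncount V W (some (node l)) : RatFunc ℚ) := by
      rw [Ncount_node V W hne]
      push_cast
      simp_rw [mul_sum]
    rw [hN]
    by_cases hdeg : (node l).deg = degO V + degO W
    · simp only [F]
      rw [deg_node_of_ne hne] at hdeg
      rw [aTree_node hne, hdeg, hlen]
      field_simp
    · have h0 := hF _ hdeg
      have : Ncount V W (some (node l)) = 0 := by
        by_contra h
        exact hdeg (deg_of_Ncount_ne h)
      rw [h0, this]; simp
  · intro a _ b _ hab
    rw [Function.onFun, disjoint_left]
    intro l h1 h2
    have := (mem_Ls.1 h1).1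
    have := (mem_Ls.1 h2).1
    omega

theorem eq_x_of_deg_one {t : PTree} (h : Reduced t) (hd : deg t = 1) : t = node [] := by
  obtain ⟨l, hl, h⟩ := h
  rw [deg_node] at hd
  have := length_le_degs l
  rw [List.length_eq_zero_iff.1 (by omega : l.length = 0)]

theorem contract_x (I : Finset ℕ) (h : I ≠ ∅) : contract (node []) I = some (node []) := by
  rw [contract, if_neg h, sub_node, subList, red_node (by simp)]
  simp

theorem deg_x : deg (node []) = 1 := by simp [deg_node]

theorem Ncount_x_left : Ncount (some (node [])) none (some (node [])) = 1 := by
  classical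
  rw [Ncount, card_eq_one]
  refine ⟨{0}, ?_⟩
  ext I
  rw [NFinset, mem_filter, mem_powerset]
  change I ⊆ range (deg (node [])) ∧ contract (node []) I = _ ∧ 
    contract (node []) (range (deg (node [])) \ I) = none ↔ _
  rw [deg_x, range_one, subset_singleton_iff, mem_singleton]
  constructor
  · rintro ⟨rfl | rfl, h, h'⟩
    · simp [contract] at h
    · rfl
  · rintro rfl
    refine ⟨Or.inr rfl, contract_x _ (by simp), by simp [contract]⟩

theorem Ncount_x_right : Ncount none (some (node [])) (some (node [])) = 1 := by
  classical
  rw [Ncount, card_eq_one]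
  refine ⟨∅, ?_⟩
  ext I
  rw [NFinset, mem_filter, mem_powerset]
  change I ⊆ range (deg (node [])) ∧ contract (node []) I = _ ∧ 
    contract (node []) (range (deg (node [])) \ I) = _ ↔ _
  rw [deg_x, range_one, subset_singleton_iff, mem_singleton]
  constructor
  · rintro ⟨rfl | rfl, h, h'⟩
    · rfl
    · simp [contract] at h
  · rintro rfl
    refine ⟨Or.inl rfl, by simp [contract], contract_x _ (by simp)⟩

theorem g_deg_one (d : ℕ) (hd : 1 ≤ d) (V W : OT) (h : degO V + degO W = 1) :
    g (Rd d) V W = (Ncount V W (some (node [])) : RatFunc ℚ) := by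
  rw [g, sum_eq_single (node [])]
  · simp [aTree_x]
  · intro T hT hne
    have : Ncount V W (some T) = 0 := by
      by_contra h0
      exact hne (eq_x_of_deg_one (mem_Rd.1 hT).1 (by rw [deg_of_Ncount_ne h0, h]))
    simp [this]
  · intro h
    exact absurd (mem_Rd.2 ⟨Reduced.node [] (by simp) (by simp), by simpa [deg_x]⟩) h

theorem g_eq_hh (D' n : ℕ) (hn : n ≤ D' + 1) : ∀ V W : OT, ROT V → ROT W →
    degO V + degO W = n → g (Rd (D' + 1)) V W = hh V W := by
  induction n using Nat.strong_induction_on with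
  | _ n ih =>
    intro V W hV hW h
    rcases Nat.lt_or_ge n 2 with hlt | hge
    · obtain rfl | rfl : n = 0 ∨ n = 1 := by omega
      · rw [degO_eq_zero (o := V) (by omega), degO_eq_zero (o := W) (by omega), g_none, hh_none]
      · rw [g_deg_one _ (by omega) V W h]
        rcases V with _ | V
        · rcases W with _ | W
          · simp [degO] at h
          · have := eq_x_of_deg_one (hW _ rfl) (by simpa [degO] using h)
            subst this
            simp [Ncount_x_right, hh, aCoeff, aTree_x]
        · have h1 := deg_pos V
          have h3 : degO W = 0 ∧ deg V = 1 := by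
            simp only [degO, Option.elim_some] at h ⊢; omega
          have := eq_x_of_deg_one (hV _ rfl) h3.2
          subst this
          rw [degO_eq_zero h3.1]
          simp [Ncount_x_left, hh, aCoeff, aTree_x]
    · subst h
      apply mul_left_cancel₀ (X_pow_sub_ne hge)
      rw [g_rec D' V W hge hn, hh_rec D' V W hV hW hge hn]
      refine sum_congr rfl fun m _ => ?_
      congr 1
      refine sum_congr rfl fun α hα => sum_congr rfl fun β hβ => ?_
      have hα' := D_facts hα hV
      have hβ' := D_facts hβ hW
      exact E_congr_le (n := degO V + degO W)
        (fun V' W' h1 h2 h3 => ih _ h3 (by omega) V' W' h1 h2 rfl)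
        (g_none _) hh_none m α β hα'.2 hβ'.2 (by omega)

end PTree

/-- For all `V, W ∈ PRT'`, the coefficients of the generic planar
exponential series satisfy the quadratic relation
`a(V)·a(W) = Σ_{T ∈ PRT', deg T = deg V + deg W} a(T)·#N_{V,W}(T)`,
the sum being finite. -/
theorem exp_coeff_quadratic (V W : OT) (hV : ROT V) (hW : ROT W) :
    {T : OT | (ROT T ∧ degO T = degO V + degO W) ∧
        aCoeff T * (Ncount V W T : RatFunc ℚ) ≠ 0}.Finite ∧
      aCoeff V * aCoeff W
        = ∑ᶠ (T : OT) (_ : ROT T ∧ degO T = degO V + degO W),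
            aCoeff T * (Ncount V W T : RatFunc ℚ) := by
  classical
  set n := degO V + degO W with hn
  have hsub : {T : OT | ROT T ∧ degO T = n} ⊆
      (((insert none ((Rd (n + 1)).image some) : Finset OT)) : Set OT) := by
    rintro (_ | T) ⟨h1, h2⟩
    · simp
    · have : T ∈ Rd (n + 1) := mem_Rd.2 ⟨h1 _ rfl, by
        change T.deg = n at h2
        omega⟩
      simp [this]
  have hfin : {T : OT | ROT T ∧ degO T = n}.Finite := (Finset.finite_toSet _).subset hsub
  refine ⟨hfin.subset (fun T hT => hT.1), ?_⟩
  have e1 : ∑ᶠ (T : OT) (_ : ROT T ∧ degO T = n), aCoeff T * (Ncount V W T : RatFunc ℚ) =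
      ∑ T ∈ hfin.toFinset, aCoeff T * (Ncount V W T : RatFunc ℚ) :=
    finsum_mem_eq_finite_toFinset_sum _ hfin
  rw [e1]
  by_cases h0 : n = 0
  · have hV0 : V = none := degO_eq_zero (by omega)
    have hW0 : W = none := degO_eq_zero (by omega)
    have hs : hfin.toFinset = {none} := by
      ext T
      rw [Set.Finite.mem_toFinset, mem_singleton]
      constructor
      · rintro ⟨_, h⟩
        exact degO_eq_zero (h.trans h0)
      · rintro rfl
        exact ⟨fun t ht => by simp at ht, by rw [h0]; rfl⟩
    have hN : Ncount none none none = 1 := by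
      rw [Ncount, card_eq_one]
      refine ⟨∅, ?_⟩
      ext I
      rw [NFinset, mem_filter, mem_powerset]
      simp [contractO, degO]
    rw [hs, sum_singleton, hV0, hW0, hN]
    simp [aCoeff]
  · have hne : ¬ (V = none ∧ W = none) := by
      rintro ⟨rfl, rfl⟩
      exact h0 (by simp [hn, degO])
    have key := g_eq_hh n n (by omega) V W hV hW rfl
    rw [hh, if_neg hne] at key
    rw [← key, g]
    have e2 : ∑ T ∈ Rd (n + 1), aTree T * (Ncount V W (some T) : RatFunc ℚ) =
        ∑ T ∈ (Rd (n + 1)).image some, aCoeff T * (Ncount V W T : RatFunc ℚ) := by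
      rw [sum_image (fun a _ b _ h => by simpa using h)]
      rfl
    rw [e2]
    symm
    refine sum_subset ?_ ?_
    · intro T hT
      have hT' := (Set.Finite.mem_toFinset _).1 hT
      have := hsub hT'
      rcases T with _ | T
      · exact absurd hT'.2.symm h0
      · simpa using this
    · intro T hT hnT
      obtain ⟨t, ht, rfl⟩ := mem_image.1 hT
      have : Ncount V W (some t) = 0 := by
        by_contra h
        apply hnT
        rw [Set.Finite.mem_toFinset]
        refine ⟨fun s hs => ?_, deg_of_Ncount_ne h⟩
        obtain rfl : t = s := by simpa using hs
        exact (mem_Rd.1 ht).1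
      simp [this]
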